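/- Gelfand–Pinsker single-letterization (rate converse step). Let M, K and the sequences S^n = (S_1,…,S_n), X^n = (X_1,…,X_n) be finitely-valued random variables such that S^n is i.i.d. (each S_i has common pmf P_S) and S^n is independent of the pair (M, K). For i = 1,…,n define U_i = (M, K, S_{i+1:n}, X_{1:i−1}). Then I(M ; X^n | K) ≤ Σ_{i=1}^n [ I(U_i ; X_i) − I(U_i ; S_i) ]. -/

import Mathlib

open Finset Filter Real

noncomputable section

open scoped Classical

/-- Pushforward of a mass function along a map. -/
def pushf {α β : Type*} [Fintype α] (p : α → ℝ) (f : α → β) : β → ℝ :=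
  fun b => ∑ a, if f a = b then p a else 0

/-- Shannon entropy (in bits) of a mass function on a finite type,
with the convention `0 * logb 2 0 = 0`. -/
def ent {α : Type*} [Fintype α] (p : α → ℝ) : ℝ := -∑ a, p a * Real.logb 2 (p a)

/-- Shannon entropy (in bits) of a random variable `f` under the mass function `p`. -/
def entRV {α β : Type*} [Fintype α] [Fintype β] (p : α → ℝ) (f : α → β) : ℝ :=
  ent (pushf p f)

/-- Mutual information `I(f; g)` (in bits) under the mass function `p`. -/
def mi {α β γ : Type*} [Fintype α] [Fintype β] [Fintype γ]
    (p : α → ℝ) (f : α → β) (g : α → γ) : ℝ :=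
  entRV p f + entRV p g - entRV p (fun a => (f a, g a))

/-- Conditional mutual information `I(f; g | h)` (in bits) under the mass function `p`. -/
def cmi {α β γ δ : Type*} [Fintype α] [Fintype β] [Fintype γ] [Fintype δ]
    (p : α → ℝ) (f : α → β) (g : α → γ) (h : α → δ) : ℝ :=
  entRV p (fun a => (f a, h a)) + entRV p (fun a => (g a, h a))
    - entRV p (fun a => (f a, g a, h a)) - entRV p h

/-- Conditional entropy `H(f | g)` (in bits) under the mass function `p`. -/
def condEnt {α β γ : Type*} [Fintype α] [Fintype β] [Fintype γ]
    (p : α → ℝ) (f : α → β) (g : α → γ) : ℝ :=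
  entRV p (fun a => (f a, g a)) - entRV p g

/-- Total variation distance between two mass functions on a finite type. -/
def TV {α : Type*} [Fintype α] (p q : α → ℝ) : ℝ := (∑ a, |p a - q a|) / 2

/-- The binary entropy function (in bits), with `h2 0 = h2 1 = 0`. -/
def h2 (t : ℝ) : ℝ := -(t * Real.logb 2 t) - (1 - t) * Real.logb 2 (1 - t)

lemma sum_pushf_mul {α β : Type*} [Fintype α] [Fintype β] (p : α → ℝ) (f : α → β) (φ : β → ℝ) :
    ∑ b, pushf p f b * φ b = ∑ a, p a * φ (f a) := by
  unfold pushf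
  simp_rw [Finset.sum_mul]
  rw [Finset.sum_comm]
  refine Finset.sum_congr rfl fun a _ => ?_
  rw [Finset.sum_eq_single (f a)]
  · simp
  · intro b _ hb
    rw [if_neg (Ne.symm hb), zero_mul]
  · simp

lemma entRV_eq {α β : Type*} [Fintype α] [Fintype β] (p : α → ℝ) (f : α → β) :
    entRV p f = -∑ a, p a * Real.logb 2 (pushf p f (f a)) := by
  unfold entRV ent
  rw [sum_pushf_mul p f (fun b => Real.logb 2 (pushf p f b))]

lemma entRV_relabel {α β γ : Type*} [Fintype α] [Fintype β] [Fintype γ] (p : α → ℝ)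
    (f : α → β) (g : α → γ) (h : ∀ a b, f a = f b ↔ g a = g b) :
    entRV p f = entRV p g := by
  rw [entRV_eq, entRV_eq]
  have : ∀ a, pushf p f (f a) = pushf p g (g a) := by
    intro a
    unfold pushf
    refine Finset.sum_congr rfl fun b _ => ?_
    by_cases hb : f b = f a
    · rw [if_pos hb, if_pos ((h b a).1 hb)]
    · rw [if_neg hb, if_neg (fun h' => hb ((h b a).2 h'))]
  simp_rw [this]

lemma pushf_nonneg {α β : Type*} [Fintype α] (p : α → ℝ) (hp0 : ∀ a, 0 ≤ p a)
    (f : α → β) (b : β) : 0 ≤ pushf p f b := by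
  unfold pushf
  refine Finset.sum_nonneg fun a _ => ?_
  split_ifs
  · exact hp0 a
  · exact le_rfl

lemma le_pushf {α β : Type*} [Fintype α] (p : α → ℝ) (hp0 : ∀ a, 0 ≤ p a)
    (f : α → β) (a : α) : p a ≤ pushf p f (f a) := by
  unfold pushf
  have := Finset.single_le_sum (f := fun x => if f x = f a then p x else 0) (s := Finset.univ)
    (fun i _ => by split_ifs; exacts [hp0 i, le_rfl]) (Finset.mem_univ a)
  simpa using this

lemma sum_pushf {α β : Type*} [Fintype α] [Fintype β] (p : α → ℝ) (f : α → β) :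
    ∑ b, pushf p f b = ∑ a, p a := by
  simpa using sum_pushf_mul p f (fun _ => 1)

lemma entRV_pair_le {α β γ : Type*} [Fintype α] [Fintype β] [Fintype γ] (p : α → ℝ)
    (hp0 : ∀ a, 0 ≤ p a) (hp1 : ∑ a, p a = 1) (f : α → β) (g : α → γ) :
    entRV p (fun a => (f a, g a)) ≤ entRV p f + entRV p g := by
  set P := pushf p (fun a => (f a, g a)) with hP
  set F := pushf p f with hF
  set G := pushf p g with hG
  have hlog2 : 0 < Real.log 2 := Real.log_pos (by norm_num)
  have key : ∑ a, p a * (Real.log (F (f a)) + Real.log (G (g a)) - Real.log (P (f a, g a))) ≤ 0 := by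
    have h1 : ∀ a, p a * (Real.log (F (f a)) + Real.log (G (g a)) - Real.log (P (f a, g a)))
        ≤ p a * (F (f a) * G (g a) / P (f a, g a)) - p a := by
      intro a
      rcases (hp0 a).eq_or_lt with h | h
      · rw [← h]; simp
      · have a1 : 0 < F (f a) := lt_of_lt_of_le h (le_pushf p hp0 f a)
        have a2 : 0 < G (g a) := lt_of_lt_of_le h (le_pushf p hp0 g a)
        have a3 : 0 < P (f a, g a) := lt_of_lt_of_le h (le_pushf p hp0 (fun a => (f a, g a)) a)
        rw [← Real.log_mul a1.ne' a2.ne', ← Real.log_div (mul_pos a1 a2).ne' a3.ne']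
        have := Real.log_le_sub_one_of_pos (div_pos (mul_pos a1 a2) a3)
        nlinarith
    have h2 : ∑ a, p a * (F (f a) * G (g a) / P (f a, g a)) ≤ 1 := by
      have e := sum_pushf_mul p (fun a => (f a, g a)) (fun x => F x.1 * G x.2 / P x)
      dsimp only at e
      rw [← e]
      calc _ ≤ ∑ x : β × γ, F x.1 * G x.2 := by
            refine Finset.sum_le_sum fun x _ => ?_
            have a1 : 0 ≤ F x.1 := pushf_nonneg p hp0 f _
            have a2 : 0 ≤ G x.2 := pushf_nonneg p hp0 g _
            rw [← hP]
            by_cases h : P x = 0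
            · rw [h, zero_mul]; exact mul_nonneg a1 a2
            · rw [mul_div_cancel₀ _ h]
        _ = (∑ b, F b) * ∑ c, G c := by
            rw [Finset.sum_mul_sum, Fintype.sum_prod_type]
        _ = 1 := by rw [hF, hG, sum_pushf, sum_pushf, hp1, one_mul]
        _ ≤ 1 := le_rfl
    calc _ ≤ ∑ a, (p a * (F (f a) * G (g a) / P (f a, g a)) - p a) :=
          Finset.sum_le_sum fun a _ => h1 a
      _ ≤ 0 := by rw [Finset.sum_sub_distrib, hp1]; linarith
  rw [entRV_eq, entRV_eq, entRV_eq, ← hP, ← hF, ← hG]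
  have e : ∑ a, p a * (Real.log (F (f a)) + Real.log (G (g a)) - Real.log (P (f a, g a)))
     = Real.log 2 * (∑ a, p a * Real.logb 2 (F (f a)) + ∑ a, p a * Real.logb 2 (G (g a))
        - ∑ a, p a * Real.logb 2 (P (f a, g a))) := by
    rw [← Finset.sum_add_distrib, ← Finset.sum_sub_distrib, Finset.mul_sum]
    refine Finset.sum_congr rfl fun a _ => ?_
    unfold Real.logb
    field_simp
  rw [e] at key
  have := nonpos_of_mul_nonpos_right key hlog2
  linarith

lemma entRV_seq_le {α γ XT : Type*} [Fintype α] [Fintype γ] [Fintype XT] (n : ℕ) (p : α → ℝ)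
    (hp0 : ∀ a, 0 ≤ p a) (hp1 : ∑ a, p a = 1) (X : α → Fin n → XT) (g : α → γ) :
    entRV p (fun a => (X a, g a)) ≤ ∑ i, entRV p (fun a => X a i) + entRV p g := by
  set A : ℕ → ℝ := fun k => entRV p
    (fun a => ((fun j : Fin n => if j.val < k then some (X a j) else none), g a)) with hA
  have h0 : A 0 = entRV p g := by
    apply entRV_relabel
    intro a b
    simp
  have hn : A n = entRV p (fun a => (X a, g a)) := by
    apply entRV_relabel
    intro a b
    simp [funext_iff]
  have hs : ∀ i : Fin n, A (i.val + 1) - A i.val ≤ entRV p (fun a => X a i) := by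
    intro i
    have h1 : A (i.val + 1) = entRV p (fun a => (((fun j : Fin n =>
        if j.val < i.val then some (X a j) else none), g a), X a i)) := by
      apply entRV_relabel
      intro a b
      simp only [Prod.mk.injEq, funext_iff]
      constructor
      · rintro ⟨h, h'⟩
        refine ⟨⟨fun j => ?_, h'⟩, ?_⟩
        · have := h j
          split_ifs with hj
          · rwa [if_pos (by omega), if_pos (by omega)] at this
          · rfl
        · simpa using h i
      · rintro ⟨⟨h, h'⟩, h''⟩
        refine ⟨fun j => ?_, h'⟩
        rcases lt_trichotomy j.val i.val with hj | hj | hj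
        · have := h j
          rw [if_pos hj, if_pos hj] at this
          rw [this]
        · rw [Fin.ext hj, h'']
        · rw [if_neg (by omega), if_neg (by omega)]
    have := entRV_pair_le p hp0 hp1 (fun a => ((fun j : Fin n =>
        if j.val < i.val then some (X a j) else none), g a)) (fun a => X a i)
    rw [← h1] at this
    linarith
  have h := Finset.sum_le_sum fun (i : Fin n) (_ : i ∈ Finset.univ) => hs i
  rw [Fin.sum_univ_eq_sum_range (fun k => A (k + 1) - A k) n, Finset.sum_range_sub, h0, hn] at h
  linarith

lemma marginal_prod {ST : Type*} [Fintype ST] (n : ℕ) (PS : ST → ℝ) (hPS1 : ∑ s, PS s = 1)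
    (i : Fin n) (x : ST) :
    ∑ s : Fin n → ST, (if s i = x then ∏ j, PS (s j) else 0) = PS x := by
  have h := Finset.prod_univ_sum (fun _ : Fin n => (Finset.univ : Finset ST))
    (fun j y => if j = i then (if y = x then PS y else 0) else PS y)
  rw [Fintype.piFinset_univ] at h
  have hl : ∏ j : Fin n, ∑ y, (if j = i then (if y = x then PS y else 0) else PS y) = PS x := by
    rw [Finset.prod_eq_single i]
    · simp
    · intro j _ hj
      simp [hj, hPS1]
    · simp
  rw [hl] at h
  rw [h]
  refine Finset.sum_congr rfl fun s _ => ?_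
  by_cases hs : s i = x
  · rw [if_pos hs]
    refine Finset.prod_congr rfl fun j _ => ?_
    by_cases hj : j = i
    · subst hj; simp [hs]
    · simp [hj]
  · rw [if_neg hs, Finset.prod_eq_zero (Finset.mem_univ i)]
    simp [hs]

lemma pushf_letter {Ω CT ST : Type*} [Fintype Ω] [Fintype CT] [Fintype ST] (n : ℕ)
    (p : Ω → ℝ) (hp1 : ∑ ω, p ω = 1) (S : Ω → Fin n → ST) (C : Ω → CT)
    (PS : ST → ℝ) (hPS1 : ∑ s, PS s = 1)
    (hiid : ∀ s c, pushf p (fun ω => (S ω, C ω)) (s, c) = (∏ i, PS (s i)) * pushf p C c)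
    (i : Fin n) (x : ST) : pushf p (fun ω => S ω i) x = PS x := by
  have h := sum_pushf_mul p (fun ω => (S ω, C ω)) (fun y => if y.1 i = x then 1 else 0)
  rw [Fintype.sum_prod_type] at h
  simp_rw [hiid] at h
  have e : ∑ s : Fin n → ST, ∑ c, (∏ i, PS (s i)) * pushf p C c * (if s i = x then 1 else 0)
      = PS x := by
    rw [← marginal_prod n PS hPS1 i x]
    refine Finset.sum_congr rfl fun s _ => ?_
    rw [← Finset.sum_mul, ← Finset.mul_sum, sum_pushf, hp1]
    simp
  rw [e] at h
  rw [h]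
  unfold pushf
  simp

lemma entRV_iid {Ω CT ST : Type*} [Fintype Ω] [Fintype CT] [Fintype ST] (n : ℕ)
    (p : Ω → ℝ) (hp0 : ∀ ω, 0 ≤ p ω) (hp1 : ∑ ω, p ω = 1) (S : Ω → Fin n → ST) (C : Ω → CT)
    (PS : ST → ℝ) (hPS1 : ∑ s, PS s = 1)
    (hiid : ∀ s c, pushf p (fun ω => (S ω, C ω)) (s, c) = (∏ i, PS (s i)) * pushf p C c) :
    entRV p (fun ω => (S ω, C ω)) = ∑ i, entRV p (fun ω => S ω i) + entRV p C := by
  simp_rw [entRV_eq, pushf_letter n p hp1 S C PS hPS1 hiid, hiid]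
  rw [Finset.sum_neg_distrib, Finset.sum_comm, ← neg_add, ← Finset.sum_add_distrib]
  congr 1
  refine Finset.sum_congr rfl fun a _ => ?_
  rw [← Finset.mul_sum, ← mul_add]
  rcases (hp0 a).eq_or_lt with h | h
  · rw [← h]; simp
  · have h3 := lt_of_lt_of_le h (le_pushf p hp0 (fun ω => (S ω, C ω)) a)
    rw [hiid] at h3
    have h4 := h3.ne'
    rw [Real.logb_mul (left_ne_zero_of_mul h4) (right_ne_zero_of_mul h4), Real.logb_prod]
    exact fun i hi => Finset.prod_ne_zero_iff.1 (left_ne_zero_of_mul h4) i hi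

/-- **Gelfand–Pinsker single-letterization (rate converse step).**  Let `M, K, Sⁿ, Xⁿ`
be finitely-valued random variables such that `Sⁿ` is i.i.d. with common pmf `P_S` and
independent of the pair `(M, K)`.  Setting `Uᵢ = (M, K, S_{i+1:n}, X_{1:i−1})`
(subsequences encoded by masking the complementary coordinates with `none`):
`I(M; Xⁿ | K) ≤ Σᵢ [I(Uᵢ; Xᵢ) − I(Uᵢ; Sᵢ)]`. -/
theorem gp_single_letterization
    {Ω MT KT ST XT : Type*} [Fintype Ω] [Fintype MT] [Fintype KT] [Fintype ST] [Fintype XT]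
    (n : ℕ)
    (p : Ω → ℝ) (hp0 : ∀ ω, 0 ≤ p ω) (hp1 : ∑ ω, p ω = 1)
    (fM : Ω → MT) (fK : Ω → KT) (fS : Ω → Fin n → ST) (fX : Ω → Fin n → XT)
    (PS : ST → ℝ) (hPS0 : ∀ s, 0 ≤ PS s) (hPS1 : ∑ s, PS s = 1)
    -- Sⁿ is i.i.d. with per-letter pmf P_S and independent of (M, K)
    (hiid : ∀ (s : Fin n → ST) (mk : MT × KT),
      pushf p (fun ω => (fS ω, fM ω, fK ω)) (s, mk)
        = (∏ i, PS (s i)) * pushf p (fun ω => (fM ω, fK ω)) mk) :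
    cmi p fM fX fK ≤
      ∑ i : Fin n,
        (mi p
          (fun ω => (fM ω, fK ω,
            (fun j : Fin n => if i < j then some (fS ω j) else none),
            (fun j : Fin n => if j < i then some (fX ω j) else none)))
          (fun ω => fX ω i)
        - mi p
          (fun ω => (fM ω, fK ω,
            (fun j : Fin n => if i < j then some (fS ω j) else none),
            (fun j : Fin n => if j < i then some (fX ω j) else none)))
          (fun ω => fS ω i)) := by
  set T : ℕ → ℝ := fun k => entRV p (fun ω => ((fM ω, fK ω),
    (fun j : Fin n => if k ≤ j.val then some (fS ω j) else none),
    (fun j : Fin n => if j.val < k then some (fX ω j) else none))) with hT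
  have hT0 : T 0 = entRV p (fun ω => (fS ω, fM ω, fK ω)) := by
    apply entRV_relabel
    intro a b
    simp [funext_iff]
    tauto
  have hTn : T n = entRV p (fun ω => (fM ω, fX ω, fK ω)) := by
    apply entRV_relabel
    intro a b
    have : ∀ j : Fin n, ¬ (n ≤ j.val) := fun j => by omega
    simp [funext_iff, this]
    tauto
  have hiid' := entRV_iid n p hp0 hp1 fS (fun ω => (fM ω, fK ω)) PS hPS1 hiid
  have hX := entRV_seq_le n p hp0 hp1 fX fK
  have hstep : ∀ i : Fin n,
        (mi p
          (fun ω => (fM ω, fK ω,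
            (fun j : Fin n => if i < j then some (fS ω j) else none),
            (fun j : Fin n => if j < i then some (fX ω j) else none)))
          (fun ω => fX ω i)
        - mi p
          (fun ω => (fM ω, fK ω,
            (fun j : Fin n => if i < j then some (fS ω j) else none),
            (fun j : Fin n => if j < i then some (fX ω j) else none)))
          (fun ω => fS ω i))
      = entRV p (fun ω => fX ω i) - entRV p (fun ω => fS ω i) + (T i.val - T (i.val + 1)) := by
    intro i
    have h1 : entRV p (fun ω => ((fM ω, fK ω,
            (fun j : Fin n => if i < j then some (fS ω j) else none),
            (fun j : Fin n => if j < i then some (fX ω j) else none)), fX ω i))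
        = T (i.val + 1) := by
      apply entRV_relabel
      intro a b
      simp only [Prod.mk.injEq, funext_iff]
      constructor
      · rintro ⟨⟨hM, hK, hs, hx⟩, h⟩
        refine ⟨⟨hM, hK⟩, fun j => ?_, fun j => ?_⟩
        · exact hs j
        · have := hx j
          rcases lt_trichotomy j i with hj | hj | hj
          · rw [if_pos hj, if_pos hj] at this
            rw [this]
          · rw [hj, h]
          · rw [if_neg (by omega), if_neg (by omega)]
      · rintro ⟨⟨hM, hK⟩, hs, hx⟩
        refine ⟨⟨hM, hK, fun j => ?_, fun j => ?_⟩, ?_⟩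
        · exact hs j
        · have := hx j
          split_ifs with hj
          · rwa [if_pos (by omega), if_pos (by omega)] at this
          · rfl
        · simpa using hx i
    have h2 : entRV p (fun ω => ((fM ω, fK ω,
            (fun j : Fin n => if i < j then some (fS ω j) else none),
            (fun j : Fin n => if j < i then some (fX ω j) else none)), fS ω i))
        = T i.val := by
      apply entRV_relabel
      intro a b
      simp only [Prod.mk.injEq, funext_iff]
      constructor
      · rintro ⟨⟨hM, hK, hs, hx⟩, h⟩
        refine ⟨⟨hM, hK⟩, fun j => ?_, fun j => ?_⟩
        · have := hs j
          rcases lt_trichotomy i j with hj | hj | hj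
          · rw [if_pos hj, if_pos hj] at this
            rw [this]
          · rw [← hj, h]
          · rw [if_neg (by omega), if_neg (by omega)]
        · exact hx j
      · rintro ⟨⟨hM, hK⟩, hs, hx⟩
        refine ⟨⟨hM, hK, fun j => ?_, fun j => ?_⟩, ?_⟩
        · have := hs j
          split_ifs with hj
          · rwa [if_pos (by omega), if_pos (by omega)] at this
          · rfl
        · exact hx j
        · simpa using hs i
    unfold mi
    rw [h1, h2]
    ring
  rw [Finset.sum_congr rfl fun i _ => hstep i, Finset.sum_add_distrib, Finset.sum_sub_distrib,
    Fin.sum_univ_eq_sum_range (fun k => T k - T (k + 1)) n, Finset.sum_range_sub', hT0, hTn, hiid']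
  unfold cmi
  linarith
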